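/- (Peano axiom for Busemann surfaces) Let (S,d) be a Busemann surface and let x, y, z ∈ S, p ∈ [x,y], q ∈ [x,z], and u ∈ [p,q]. Then there exists a point v ∈ [y,z] such that u ∈ [x,v]. -/

import Mathlib

open Metric Set MeasureTheory

/-- `γ` is a geodesic on the interval `[a, b]`. -/
def IsGeodesicOn {S : Type*} [MetricSpace S] (γ : ℝ → S) (a b : ℝ) : Prop :=
  ∀ s ∈ Set.Icc a b, ∀ t ∈ Set.Icc a b, dist (γ s) (γ t) = |s - t|

/-- `γ` is a geodesic from `x` to `y`. -/
def IsGeodesicFromTo {S : Type*} [MetricSpace S] (γ : ℝ → S) (x y : S) : Prop :=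
  IsGeodesicOn γ 0 (dist x y) ∧ γ 0 = x ∧ γ (dist x y) = y

/-- A geodesic metric space: every pair of points is joined by a geodesic. -/
def IsGeodesicMetricSpace (S : Type*) [MetricSpace S] : Prop :=
  ∀ x y : S, ∃ γ : ℝ → S, IsGeodesicFromTo γ x y

/-- A Busemann space: a geodesic metric space in which the distance function between
any two geodesics is convex. -/
def IsBusemannSpace (S : Type*) [MetricSpace S] : Prop :=
  IsGeodesicMetricSpace S ∧
    ∀ (γ γ' : ℝ → S) (a b a' b' : ℝ), a ≤ b → a' ≤ b' →
      IsGeodesicOn γ a b → IsGeodesicOn γ' a' b' →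
      ConvexOn ℝ (Set.Icc (0 : ℝ) 1)
        (fun t => dist (γ ((1 - t) * a + t * b)) (γ' ((1 - t) * a' + t * b')))

/-- A Busemann surface: a Busemann space homeomorphic to the plane `ℝ²`. -/
def IsBusemannSurface (S : Type*) [MetricSpace S] : Prop :=
  IsBusemannSpace S ∧ Nonempty (S ≃ₜ (ℝ × ℝ))

/-- `G` is the image of a geodesic from `x` to `y`. -/
def IsGeodesicSegment {S : Type*} [MetricSpace S] (x y : S) (G : Set S) : Prop :=
  ∃ γ : ℝ → S, IsGeodesicFromTo γ x y ∧ G = γ '' Set.Icc 0 (dist x y)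

/-- Convexity of a set with respect to a geodesic-segment assignment `seg`. -/
def SegConvex {S : Type*} (seg : S → S → Set S) (R : Set S) : Prop :=
  ∀ p ∈ R, ∀ q ∈ R, seg p q ⊆ R

/-- The convex hull: the smallest `seg`-convex set containing `Q`. -/
def segConvexHull {S : Type*} (seg : S → S → Set S) (Q : Set S) : Set S :=
  ⋂₀ {R : Set S | SegConvex seg R ∧ Q ⊆ R}

/-- A line of `S`: the image of an isometric embedding of `ℝ` into `S`. -/
def IsLineSet {S : Type*} [MetricSpace S] (L : Set S) : Prop :=
  ∃ ℓ : ℝ → S, Isometry ℓ ∧ L = Set.range ℓ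

/-- An open halfplane determined by a line `L`: a connected component of `S \ L`. -/
def IsOpenHalfplane {S : Type*} [MetricSpace S] (L H : Set S) : Prop :=
  ∃ x, x ∉ L ∧ H = connectedComponentIn Lᶜ x

/-- A closed halfplane determined by a line `L`: an open halfplane together with `L`. -/
def IsClosedHalfplane {S : Type*} [MetricSpace S] (L H : Set S) : Prop :=
  ∃ H', IsOpenHalfplane L H' ∧ H = H' ∪ L

/-- `X` and `Y` are line-separable: they lie in different open halfplanes of some line. -/
def LineSeparable {S : Type*} [MetricSpace S] (X Y : Set S) : Prop :=
  ∃ L H₁ H₂ : Set S, IsLineSet L ∧ IsOpenHalfplane L H₁ ∧ IsOpenHalfplane L H₂ ∧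
    H₁ ≠ H₂ ∧ X ⊆ H₁ ∧ Y ⊆ H₂

/-- `X` and `Y` are weakly line-separable: they lie in different closed halfplanes of
some line. -/
def WeaklyLineSeparable {S : Type*} [MetricSpace S] (X Y : Set S) : Prop :=
  ∃ L H₁ H₂ : Set S, IsLineSet L ∧ IsClosedHalfplane L H₁ ∧ IsClosedHalfplane L H₂ ∧
    H₁ ≠ H₂ ∧ X ⊆ H₁ ∧ Y ⊆ H₂

/-- `Q` is in general position: no three distinct points of `Q` lie on a common line. -/
def InGeneralPosition {S : Type*} [MetricSpace S] (Q : Set S) : Prop :=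
  ∀ x ∈ Q, ∀ y ∈ Q, ∀ z ∈ Q, x ≠ y → y ≠ z → x ≠ z →
    ∀ L : Set S, IsLineSet L → ¬(x ∈ L ∧ y ∈ L ∧ z ∈ L)

/-- `L` is a tangent line of the set `K`. -/
def IsTangentLine {S : Type*} [MetricSpace S] (L K : Set S) : Prop :=
  IsLineSet L ∧ (K ∩ L).Nonempty ∧ ∃ H, IsClosedHalfplane L H ∧ K ⊆ H

/-- `L` is an inner bitangent of `K'` and `K''`. -/
def IsInnerBitangent {S : Type*} [MetricSpace S] (L K' K'' : Set S) : Prop :=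
  IsTangentLine L K' ∧ IsTangentLine L K'' ∧
    ∃ H₁ H₂, IsClosedHalfplane L H₁ ∧ IsClosedHalfplane L H₂ ∧ H₁ ≠ H₂ ∧
      K' ⊆ H₁ ∧ K'' ⊆ H₂

/-!
Composing two instances of the Pasch property (`p ∈ [x, y]` and `u ∈ [p, z]` give `v ∈ [y, z]` with
`u ∈ [x, v]`) yields the Peano axiom, so only Pasch has to be proved. If it fails, then the points
`x`, `y`, `u` are joined to `p` and to `z` by geodesics forming a theta graph in the plane, with
three arcs `p → x → z`, `p → y → z`, `p → u → z`. The closed curve formed by any two of the arcs has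
winding number zero about the middle point of the third, since it contracts along geodesic cones
avoiding that point. No planar theta graph has this property, because one arc must run inside the
curve formed by the other two; here this is seen by comparing the variation of `log` along the arcs.
-/

open scoped unitInterval

section ContinuousLogarithm

variable {X : Type*} [TopologicalSpace X]

theorem exists_continuous_exp_eq [ContractibleSpace X] {f : X → ℂ} (hf : Continuous f)
    (hf₀ : ∀ x, f x ≠ 0) : ∃ L : X → ℂ, Continuous L ∧ ∀ x, Complex.exp (L x) = f x := by
  obtain ⟨c, ⟨contraction⟩⟩ := id_nullhomotopic X
  let f' : C(X, {z : ℂ // z ≠ 0}) := ⟨fun x ↦ ⟨f x, hf₀ x⟩, hf.subtype_mk _⟩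
  let H : C(I × X, {z : ℂ // z ≠ 0}) := f'.comp contraction.symm.toContinuousMap
  have hH₀ (x : X) : H (0, x) = ⟨_, (ContinuousMap.const X (Complex.log (f c)) x).exp_ne_zero⟩ :=
    Subtype.ext (by simp [H, f', Complex.exp_log (hf₀ c)])
  let L := Complex.isCoveringMap_exp.liftHomotopy H _ hH₀
  refine ⟨fun x ↦ L (1, x), by fun_prop, fun x ↦ ?_⟩
  have hL := congrFun (Complex.isCoveringMap_exp.liftHomotopy_lifts H _ hH₀) (1, x)
  exact (congrArg Subtype.val hL).trans (by simp [H, f'])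

theorem sub_eq_sub_of_exp_eq_exp [PreconnectedSpace X] {L K : X → ℂ} (hL : Continuous L)
    (hK : Continuous K) (hLK : ∀ x, Complex.exp (L x) = Complex.exp (K x)) (a b : X) :
    L b - L a = K b - K a := by
  have hshift : (fun x ↦ L x + (K a - L a)) = K := by
    refine Complex.isCoveringMap_exp.eq_of_comp_eq (by fun_prop) hK (funext fun x ↦ ?_) a (by ring)
    refine Subtype.ext ?_
    simp only [Function.comp_apply, Complex.exp_add, Complex.exp_sub, hLK,
      div_self (Complex.exp_ne_zero _), mul_one]
  linear_combination congrFun hshift b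

end ContinuousLogarithm

section LogVariation

open Classical in
/-- The increment of a continuous logarithm of `f` over the unit interval; it is `2πi` times the
winding number about `0` when `f` is a closed curve. If `f` has no continuous logarithm, the value
is `0`. -/
noncomputable def logVariation (f : I → ℂ) : ℂ :=
  if h : ∃ L : I → ℂ, Continuous L ∧ ∀ t, Complex.exp (L t) = f t then h.choose 1 - h.choose 0
  else 0

theorem logVariation_eq_sub {f L : I → ℂ} (hL : Continuous L)
    (hLf : ∀ t, Complex.exp (L t) = f t) : logVariation f = L 1 - L 0 := by
  have h : ∃ L : I → ℂ, Continuous L ∧ ∀ t, Complex.exp (L t) = f t := ⟨L, hL, hLf⟩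
  rw [logVariation, dif_pos h]
  exact sub_eq_sub_of_exp_eq_exp h.choose_spec.1 hL
    (fun t ↦ (h.choose_spec.2 t).trans (hLf t).symm) 0 1

theorem logVariation_const {c : ℂ} (hc : c ≠ 0) : logVariation (fun _ ↦ c) = 0 := by
  rw [logVariation_eq_sub (continuous_const (y := Complex.log c)) fun _ ↦ Complex.exp_log hc,
    sub_self]

instance contractibleSpace_unitInterval : ContractibleSpace I :=
  (convex_Icc 0 1).contractibleSpace ⟨0, left_mem_Icc.2 zero_le_one⟩

variable {f : I → ℂ}

theorem exp_logVariation (hf : Continuous f) (hf₀ : ∀ t, f t ≠ 0) :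
    Complex.exp (logVariation f) = f 1 / f 0 := by
  obtain ⟨L, hL, hLf⟩ := exists_continuous_exp_eq hf hf₀
  rw [logVariation_eq_sub hL hLf, Complex.exp_sub, hLf, hLf]

theorem logVariation_neg (hf : Continuous f) (hf₀ : ∀ t, f t ≠ 0) :
    logVariation (fun t ↦ -f t) = logVariation f := by
  obtain ⟨L, hL, hLf⟩ := exists_continuous_exp_eq hf hf₀
  rw [logVariation_eq_sub hL hLf, logVariation_eq_sub (L := fun t ↦ L t + Real.pi * Complex.I)
    (by fun_prop) fun t ↦ by rw [Complex.exp_antiperiodic, hLf]]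
  ring

theorem logVariation_diagonal {F : I × I → ℂ} (hF : Continuous F) (hF₀ : ∀ q, F q ≠ 0) :
    logVariation (fun t ↦ F (t, t)) =
      logVariation (fun t ↦ F (t, 0)) + logVariation (fun t ↦ F (1, t)) := by
  obtain ⟨L, hL, hLF⟩ := exists_continuous_exp_eq hF hF₀
  rw [logVariation_eq_sub (L := fun t ↦ L (t, t)) (by fun_prop) fun t ↦ hLF _,
    logVariation_eq_sub (L := fun t ↦ L (t, 0)) (by fun_prop) fun t ↦ hLF _,
    logVariation_eq_sub (L := fun t ↦ L (1, t)) (by fun_prop) fun t ↦ hLF _]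
  ring

end LogVariation

section ThetaGraph

/-- The variation of `log (ζ - c)` as `ζ` runs along the path `γ`. -/
noncomputable def logVariationAround (γ : I → ℂ) (c : ℂ) : ℂ := logVariation fun t ↦ γ t - c

theorem logVariation_path_sub_path {a b v w : ℂ} (f : Path a v) (g : Path b w)
    (hfg : ∀ s t, f s ≠ g t) :
    logVariation (fun t ↦ f t - g t) = logVariationAround f b + logVariationAround g v := by
  have hF : Continuous fun q : I × I ↦ f q.1 - g q.2 := by fun_prop
  have hdiag := logVariation_diagonal hF fun q ↦ sub_ne_zero.2 (hfg q.1 q.2)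
  have hneg : logVariation (fun t ↦ v - g t) = logVariation fun t ↦ g t - v := by
    simpa only [neg_sub] using logVariation_neg (f := fun t ↦ g t - v) (by fun_prop)
      fun t ↦ sub_ne_zero.2 fun h ↦ hfg 1 t (f.target.trans h.symm)
  simpa only [logVariationAround, g.source, f.target, hneg] using hdiag

theorem exists_sub_ne_of_exp_eq_neg {N : Fin 3 → Fin 3 → ℂ}
    (hN : Complex.exp (N 0 1) = -Complex.exp (N 1 0)) :
    ∃ k, N (k + 1) k - N k (k + 1) ≠ N (k + 2) k - N k (k + 2) := by
  by_contra! hcolumn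
  have hN_symm : N 0 1 = N 1 0 := by
    have h₀ : N 1 0 - N 0 1 = N 2 0 - N 0 2 := hcolumn 0
    have h₁ : N 2 1 - N 1 2 = N 0 1 - N 1 0 := hcolumn 1
    have h₂ : N 0 2 - N 2 0 = N 1 2 - N 2 1 := hcolumn 2
    linear_combination (h₂ - h₁ - h₀) / 2
  rw [hN_symm] at hN
  exact Complex.exp_ne_zero _ (self_eq_neg.1 hN)

-- With `N i j` the variation of `log (f i - g j)`, the equality of the two sides at `w k` would say
-- that the antisymmetric matrix `N i j - N j i` is constant on the off-diagonal part of column `k`.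
theorem exists_logVariationAround_sub_ne {a b : ℂ} {w : Fin 3 → ℂ} (f : ∀ i, Path a (w i))
    (g : ∀ i, Path b (w i)) (hfg : Pairwise fun i j ↦ ∀ s t, f i s ≠ g j t) :
    ∃ k, logVariationAround (f (k + 1)) (w k) - logVariationAround (g (k + 1)) (w k) ≠
      logVariationAround (f (k + 2)) (w k) - logVariationAround (g (k + 2)) (w k) := by
  let N (i j : Fin 3) : ℂ := logVariation fun t ↦ f i t - g j t
  have hN_exp {i j : Fin 3} (hij : i ≠ j) : Complex.exp (N i j) = (w i - w j) / (a - b) := by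
    rw [exp_logVariation (by fun_prop) fun t ↦ sub_ne_zero.2 (hfg hij t t)]
    simp only [Path.source, Path.target]
  have hN_f {i j : Fin 3} (hij : i ≠ j) :
      N i j = logVariationAround (f i) b + logVariationAround (g j) (w i) :=
    logVariation_path_sub_path _ _ (hfg hij)
  have hN_g {i j : Fin 3} (hij : i ≠ j) :
      N i j = logVariationAround (g j) a + logVariationAround (f i) (w j) := by
    rw [← logVariation_path_sub_path (g j) (f i) fun s t ↦ (hfg hij t s).symm,
      ← logVariation_neg (by fun_prop) fun t ↦ sub_ne_zero.2 (hfg hij t t).symm]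
    simp only [N, neg_sub]
  have hN_sub {i k : Fin 3} (hik : i ≠ k) :
      logVariationAround (f i) (w k) - logVariationAround (g i) (w k) =
        N i k - N k i + (logVariationAround (f k) b - logVariationAround (g k) a) := by
    linear_combination hN_f hik.symm - hN_g hik
  have hN_neg : Complex.exp (N 0 1) = -Complex.exp (N 1 0) := by
    rw [hN_exp (by decide), hN_exp (by decide), ← neg_div, neg_sub]
  obtain ⟨k, hk⟩ := exists_sub_ne_of_exp_eq_neg hN_neg
  have hk₁ : k + 1 ≠ k := by clear * -; decide +revert
  have hk₂ : k + 2 ≠ k := by clear * -; decide +revert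
  exact ⟨k, by rwa [hN_sub hk₁, hN_sub hk₂, Ne, add_left_inj]⟩

end ThetaGraph

section Betweenness

variable {S : Type*} [PseudoMetricSpace S]

/-- Metric betweenness, as equality in the triangle inequality. In a uniquely geodesic space this
says `r ∈ [a, b]`, so that segments can be handled without parametrizations. -/
def DistBtw (a r b : S) : Prop := dist a r + dist r b = dist a b

theorem distBtw_self_left (a b : S) : DistBtw a a b := by simp [DistBtw]

theorem distBtw_self_right (a b : S) : DistBtw a b b := by simp [DistBtw]

theorem mul_dist_mem_Icc (x y : S) {t : ℝ} (ht : t ∈ Icc (0 : ℝ) 1) :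
    t * dist x y ∈ Icc 0 (dist x y) :=
  ⟨mul_nonneg ht.1 dist_nonneg, mul_le_of_le_one_left dist_nonneg ht.2⟩

variable {a b c r : S}

theorem DistBtw.symm (h : DistBtw a r b) : DistBtw b r a := by
  rw [DistBtw, add_comm, dist_comm r a, dist_comm b r, dist_comm b a, h]

theorem DistBtw.trans_left (hb : DistBtw a b c) (hr : DistBtw a r b) : DistBtw a r c := by
  unfold DistBtw at *
  linarith [dist_triangle a r c, dist_triangle r b c]

theorem DistBtw.trans_right (hb : DistBtw a b c) (hr : DistBtw b r c) : DistBtw a r c :=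
  (hb.symm.trans_left hr.symm).symm

theorem DistBtw.trans_left_right (hb : DistBtw a b c) (hr : DistBtw a r b) : DistBtw r b c := by
  unfold DistBtw at *
  linarith [dist_triangle a r c, dist_triangle r b c]

theorem DistBtw.trans_right_left (hb : DistBtw a b c) (hr : DistBtw b r c) : DistBtw a b r :=
  (hb.symm.trans_left_right hr.symm).symm

theorem DistBtw.dist_left_le (h : DistBtw a r b) : dist a r ≤ dist a b :=
  (le_add_of_nonneg_right dist_nonneg).trans_eq h

variable {x y z p u : S}

theorem pairwise_not_distBtw_of_not_distBtw (hp : DistBtw x p y) (hu : DistBtw p u z)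
    (hxy : ¬ DistBtw x u y) (hxz : ¬ DistBtw x u z) (hyz : ¬ DistBtw y u z) :
    Pairwise fun i j ↦ ∀ r, DistBtw p r (![x, y, u] i) → ¬ DistBtw z r (![x, y, u] j) := by
  have hx_y {x y : S} (hp : DistBtw x p y) (hyz : ¬ DistBtw y u z) (r : S) (hr : DistBtw p r x) :
      ¬ DistBtw z r y := fun hr' ↦
    hyz (.trans_right (hr'.symm.trans_left (hp.trans_left_right hr.symm).symm) hu)
  have hx_u {x y : S} (hp : DistBtw x p y) (hxy : ¬ DistBtw x u y) (r : S) (hr : DistBtw p r x) :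
      ¬ DistBtw z r u := fun hr' ↦
    hxy (hp.trans_left (hr.trans_left (hu.trans_right_left hr'.symm)).symm)
  have hu_x {x : S} (hxz : ¬ DistBtw x u z) (r : S) (hr : DistBtw p r u) : ¬ DistBtw z r x :=
    fun hr' ↦ hxz (hr'.symm.trans_right (hu.trans_left_right hr))
  have hyx : ¬ DistBtw y u x := mt DistBtw.symm hxy
  intro i j hij
  fin_cases i <;> fin_cases j
  · exact absurd rfl hij
  · exact hx_y hp hyz
  · exact hx_u hp hxy
  · exact hx_y hp.symm hxz
  · exact absurd rfl hij
  · exact hx_u hp.symm hyx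
  · exact hu_x hxz
  · exact hu_x hyz
  · exact absurd rfl hij

end Betweenness

section UniqueGeodesicFamily

variable {S : Type*} [MetricSpace S]

/-- `S` is uniquely geodesic, `G x y` is the constant speed parametrization of the geodesic `[x, y]`
by the unit interval, and geodesics issuing from a fixed point depend continuously on their
endpoint. -/
structure IsUniqueGeodesicFamily (G : ∀ x y : S, Path x y) : Prop where
  dist_apply_apply (x y : S) (s t : I) : dist (G x y s) (G x y t) = |(s : ℝ) - t| * dist x y
  exists_apply_eq {x r y : S} : DistBtw x r y → ∃ t, G x y t = r
  continuous_apply (x : S) : Continuous fun q : S × I ↦ G x q.1 q.2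

namespace IsUniqueGeodesicFamily

variable {G : ∀ x y : S, Path x y} (hG : IsUniqueGeodesicFamily G)

include hG

theorem dist_left_apply (x y : S) (t : I) : dist x (G x y t) = t * dist x y := by
  simpa [abs_of_nonneg t.2.1] using hG.dist_apply_apply x y 0 t

theorem apply_self (x : S) (t : I) : G x x t = x :=
  (dist_eq_zero.1 (by rw [hG.dist_left_apply, dist_self, mul_zero])).symm

theorem distBtw_apply_apply (x y : S) {s t : I} (hst : s ≤ t) :
    DistBtw x (G x y s) (G x y t) := by
  have habs : |(s : ℝ) - t| = t - s := by
    rw [abs_sub_comm, abs_of_nonneg (sub_nonneg.2 (Subtype.coe_le_coe.2 hst))]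
  rw [DistBtw, hG.dist_left_apply, hG.dist_left_apply, hG.dist_apply_apply, habs]
  ring

theorem distBtw_apply (x y : S) (t : I) : DistBtw x (G x y t) y := by
  simpa only [Path.target] using hG.distBtw_apply_apply x y (unitInterval.le_one' (t := t))

theorem distBtw_or_distBtw {a b r r' : S} (hr : DistBtw a r b) (hr' : DistBtw a r' b) :
    DistBtw a r r' ∨ DistBtw a r' r := by
  obtain ⟨s, rfl⟩ := hG.exists_apply_eq hr
  obtain ⟨t, rfl⟩ := hG.exists_apply_eq hr'
  exact (le_total s t).imp (hG.distBtw_apply_apply a b) (hG.distBtw_apply_apply a b)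

end IsUniqueGeodesicFamily

end UniqueGeodesicFamily

section GeodesicLogVariation

variable {S : Type*} [MetricSpace S]

/-- The variation of `log (φ - φ r)` along the geodesic `G x y`, for a map `φ` to the plane. -/
noncomputable def geodesicLogVariation (φ : S → ℂ) (G : ∀ x y : S, Path x y) (r x y : S) : ℂ :=
  logVariationAround (φ ∘ G x y) (φ r)

variable {G : ∀ x y : S, Path x y} (hG : IsUniqueGeodesicFamily G) {φ : S → ℂ}
  (hφ : Continuous φ) (hinj : Function.Injective φ)

include hG hφ hinj

theorem geodesicLogVariation_add_of_cone {r x y z : S}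
    (hr : ∀ w, DistBtw y w z → ¬ DistBtw x r w) :
    geodesicLogVariation φ G r x y + geodesicLogVariation φ G r y z =
      geodesicLogVariation φ G r x z := by
  let F (q : I × I) : ℂ := φ (G x (G y z q.1) q.2) - φ r
  have hF : Continuous F :=
    (hφ.comp ((hG.continuous_apply x).comp
      (((G y z).continuous.comp continuous_fst).prodMk continuous_snd))).sub continuous_const
  have hF₀ (q : I × I) : F q ≠ 0 := fun h ↦
    hr _ (hG.distBtw_apply y z q.1) (hinj (sub_eq_zero.1 h) ▸ hG.distBtw_apply x _ q.2)
  have hxr : φ x - φ r ≠ 0 := by simpa [F] using hF₀ (0, 0)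
  have happex := logVariation_diagonal hF hF₀
  have hbase := logVariation_diagonal (hF.comp continuous_swap) fun q ↦ hF₀ q.swap
  have hstart : ⇑(G x (G y z 0)) = G x y := congrArg (fun w ↦ ⇑(G x w)) (G y z).source
  have hend : ⇑(G x (G y z 1)) = G x z := congrArg (fun w ↦ ⇑(G x w)) (G y z).target
  simp only [F, hstart, hend, Path.source, Path.target, logVariation_const hxr, zero_add,
    Function.comp_apply, Prod.swap_prod_mk] at happex hbase
  exact hbase.symm.trans happex

theorem geodesicLogVariation_symm {r x y : S} (hr : ¬ DistBtw x r y) :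
    geodesicLogVariation φ G r y x = -geodesicLogVariation φ G r x y := by
  have hround := geodesicLogVariation_add_of_cone hG hφ hinj (x := x) (y := y) (z := x) (r := r)
    fun w hw h ↦ hr (hw.symm.trans_left h)
  have hxr : φ x - φ r ≠ 0 := sub_ne_zero.2 fun h ↦ hr (hinj h ▸ distBtw_self_left x y)
  have hzero : geodesicLogVariation φ G r x x = 0 := by
    simp only [geodesicLogVariation, logVariationAround, Function.comp_apply, hG.apply_self,
      logVariation_const hxr]
  linear_combination hround + hzero

theorem exists_geodesicLogVariation_sub_ne {p z : S} {w : Fin 3 → S}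
    (hw : Pairwise fun i j ↦ ∀ r, DistBtw p r (w i) → ¬ DistBtw z r (w j)) :
    ∃ k, geodesicLogVariation φ G (w k) p (w (k + 1)) -
        geodesicLogVariation φ G (w k) z (w (k + 1)) ≠
      geodesicLogVariation φ G (w k) p (w (k + 2)) -
        geodesicLogVariation φ G (w k) z (w (k + 2)) :=
  exists_logVariationAround_sub_ne (w := fun i ↦ φ (w i)) (fun i ↦ (G p (w i)).map hφ)
    (fun i ↦ (G z (w i)).map hφ) fun i j hij s t hst ↦
      hw hij _ (hG.distBtw_apply p (w i) s) (hinj hst ▸ hG.distBtw_apply z (w j) t)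

end GeodesicLogVariation

section Pasch

variable {S : Type*} [MetricSpace S] {x y z p u : S} {G : ∀ x y : S, Path x y}
  (hG : IsUniqueGeodesicFamily G)

include hG

theorem not_distBtw_vertex (hp : DistBtw x p y) (hu : DistBtw p u z) (hxy : ¬ DistBtw x u y)
    (hyz : ¬ DistBtw y u z) : ¬ DistBtw p y z := fun hy ↦
  (hG.distBtw_or_distBtw hu hy).elim (fun h ↦ hxy (hp.trans_right h))
    fun h ↦ hyz (hu.trans_left_right h)

variable {φ : S → ℂ} (hφ : Continuous φ) (hinj : Function.Injective φ)

include hφ hinj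

theorem geodesicLogVariation_sub_eq_at_vertex (hp : DistBtw x p y) (hu : DistBtw p u z)
    (hy : ¬ DistBtw p y z) :
    geodesicLogVariation φ G y p u - geodesicLogVariation φ G y z u =
      geodesicLogVariation φ G y p x - geodesicLogVariation φ G y z x := by
  have cone_x := geodesicLogVariation_add_of_cone hG hφ hinj (r := y) (x := z) (y := p) (z := x)
    fun w hw h ↦ hy (h.symm.trans_left_right (hp.trans_left_right hw.symm))
  have cone_u := geodesicLogVariation_add_of_cone hG hφ hinj (r := y) (x := z) (y := p) (z := u)
    fun w hw h ↦ hy ((hu.trans_left hw).symm.trans_left h).symm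
  linear_combination cone_u - cone_x

theorem geodesicLogVariation_sub_eq_at_center (hp : DistBtw x p y)
    (hno : ∀ v, DistBtw y v z → ¬ DistBtw x u v) :
    geodesicLogVariation φ G u p x - geodesicLogVariation φ G u z x =
      geodesicLogVariation φ G u p y - geodesicLogVariation φ G u z y := by
  have hxy : ¬ DistBtw x u y := hno y (distBtw_self_left _ _)
  have hxz : ¬ DistBtw x u z := hno z (distBtw_self_right _ _)
  have hyz : ¬ DistBtw y u z := fun h ↦ hno u h (distBtw_self_right _ _)
  have cone_yz := geodesicLogVariation_add_of_cone hG hφ hinj hno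
  have cone_py := geodesicLogVariation_add_of_cone hG hφ hinj (r := u) (x := x) (y := p) (z := y)
    fun w hw h ↦ hxy ((hp.trans_right hw).trans_left h)
  have symm_px := geodesicLogVariation_symm hG hφ hinj fun h ↦ hxy (hp.trans_left h)
  have symm_xz := geodesicLogVariation_symm hG hφ hinj hxz
  have symm_yz := geodesicLogVariation_symm hG hφ hinj hyz
  linear_combination symm_px + symm_yz - symm_xz - cone_yz - cone_py

theorem pasch_distBtw (hp : DistBtw x p y) (hu : DistBtw p u z) :
    ∃ v, DistBtw y v z ∧ DistBtw x u v := by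
  by_contra! hno
  have hxy : ¬ DistBtw x u y := hno y (distBtw_self_left _ _)
  have hxz : ¬ DistBtw x u z := hno z (distBtw_self_right _ _)
  have hyz : ¬ DistBtw y u z := fun h ↦ hno u h (distBtw_self_right _ _)
  obtain ⟨k, hk⟩ := exists_geodesicLogVariation_sub_ne hG hφ hinj
    (pairwise_not_distBtw_of_not_distBtw hp hu hxy hxz hyz)
  fin_cases k
  · exact hk (geodesicLogVariation_sub_eq_at_vertex hG hφ hinj hp.symm hu
      (not_distBtw_vertex hG hp.symm hu (mt DistBtw.symm hxy) hxz)).symm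
  · exact hk (geodesicLogVariation_sub_eq_at_vertex hG hφ hinj hp hu
      (not_distBtw_vertex hG hp hu hxy hyz))
  · exact hk (geodesicLogVariation_sub_eq_at_center hG hφ hinj hp hno)

theorem peano_distBtw {q : S} (hp : DistBtw x p y) (hq : DistBtw x q z)
    (hu : DistBtw p u q) : ∃ v, DistBtw y v z ∧ DistBtw x u v := by
  obtain ⟨v', hv', huv'⟩ := pasch_distBtw hG hφ hinj hq hu.symm
  obtain ⟨v, hv, hv'v⟩ := pasch_distBtw hG hφ hinj hp hv'.symm
  exact ⟨v, hv, hv'v.trans_left huv'⟩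

end Pasch

section Geodesics

variable {S : Type*} [MetricSpace S] {γ : ℝ → S} {x y r : S}

theorem isGeodesicOn_of_dist_le {a b : ℝ}
    (hle : ∀ s ∈ Icc a b, ∀ t ∈ Icc a b, s ≤ t → dist (γ s) (γ t) ≤ t - s)
    (hab : b - a ≤ dist (γ a) (γ b)) : IsGeodesicOn γ a b := by
  have heq : ∀ s ∈ Icc a b, ∀ t ∈ Icc a b, s ≤ t → dist (γ s) (γ t) = t - s := by
    intro s hs t ht hst
    have ha : a ∈ Icc a b := left_mem_Icc.2 (hs.1.trans hs.2)
    have hb : b ∈ Icc a b := right_mem_Icc.2 (hs.1.trans hs.2)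
    linarith [hle s hs t ht hst, hle a ha s hs hs.1, hle t ht b hb ht.2,
      dist_triangle4 (γ a) (γ s) (γ t) (γ b)]
  intro s hs t ht
  rcases le_total s t with hst | hts
  · rw [heq s hs t ht hst, abs_sub_comm, abs_of_nonneg (sub_nonneg.2 hst)]
  · rw [dist_comm, heq t ht s hs hts, abs_of_nonneg (sub_nonneg.2 hts)]

theorem IsGeodesicFromTo.distBtw (hγ : IsGeodesicFromTo γ x y) {t : ℝ}
    (ht : t ∈ Icc 0 (dist x y)) : DistBtw x (γ t) y := by
  obtain ⟨hγ, hx, hy⟩ := hγ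
  have hleft := hγ 0 (left_mem_Icc.2 dist_nonneg) t ht
  have hright := hγ t ht _ (right_mem_Icc.2 dist_nonneg)
  rw [hx, zero_sub, abs_neg, abs_of_nonneg ht.1] at hleft
  rw [hy, abs_sub_comm, abs_of_nonneg (sub_nonneg.2 ht.2)] at hright
  rw [DistBtw, hleft, hright, add_sub_cancel]

theorem IsGeodesicFromTo.concat {α β : ℝ → S} (hα : IsGeodesicFromTo α x r)
    (hβ : IsGeodesicFromTo β r y) (hr : DistBtw x r y) :
    IsGeodesicFromTo (fun t ↦ if t ≤ dist x r then α t else β (t - dist x r)) x y := by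
  obtain ⟨hα, hαx, hαr⟩ := hα
  obtain ⟨hβ, hβr, hβy⟩ := hβ
  set γ : ℝ → S := fun t ↦ if t ≤ dist x r then α t else β (t - dist x r)
  have hγα {t : ℝ} (ht : t ≤ dist x r) : γ t = α t := if_pos ht
  have hγβ {t : ℝ} (ht : dist x r ≤ t) : γ t = β (t - dist x r) := by
    rcases ht.eq_or_lt with rfl | ht
    · rw [hγα le_rfl, hαr, sub_self, hβr]
    · exact if_neg ht.not_ge
  have hγx : γ 0 = x := (hγα dist_nonneg).trans hαx
  have hγy : γ (dist x y) = y := by rw [hγβ hr.dist_left_le, ← hr, add_sub_cancel_left, hβy]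
  have hleft {s t : ℝ} (hs : 0 ≤ s) (hst : s ≤ t) (ht : t ≤ dist x r) :
      dist (γ s) (γ t) ≤ t - s := by
    rw [hγα ht, hγα (hst.trans ht), hα s ⟨hs, hst.trans ht⟩ t ⟨hs.trans hst, ht⟩, abs_sub_comm,
      abs_of_nonneg (sub_nonneg.2 hst)]
  have hright {s t : ℝ} (hs : dist x r ≤ s) (hst : s ≤ t) (ht : t ≤ dist x y) :
      dist (γ s) (γ t) ≤ t - s := by
    have ht' : t - dist x r ≤ dist r y := sub_le_iff_le_add'.2 (ht.trans_eq (Eq.symm hr))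
    have hst' : s - dist x r ≤ t - dist x r := sub_le_sub_right hst _
    rw [hγβ hs, hγβ (hs.trans hst), hβ _ ⟨sub_nonneg.2 hs, hst'.trans ht'⟩ _
      ⟨sub_nonneg.2 (hs.trans hst), ht'⟩, sub_sub_sub_cancel_right, abs_sub_comm,
      abs_of_nonneg (sub_nonneg.2 hst)]
  refine ⟨isGeodesicOn_of_dist_le (fun s hs t ht hst ↦ ?_) ?_, hγx, hγy⟩
  · rcases le_total t (dist x r) with htr | hrt
    · exact hleft hs.1 hst htr
    rcases le_total s (dist x r) with hsr | hrs
    · linarith [hleft hs.1 hsr le_rfl, hright le_rfl hrt ht.2,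
        dist_triangle (γ s) (γ (dist x r)) (γ t)]
    · exact hright hrs hst ht.2
  · rw [hγx, hγy, sub_zero]

end Geodesics

namespace IsBusemannSpace

variable {S : Type*} [MetricSpace S] {γ γ' : ℝ → S} {x y x' y' r : S}

theorem dist_apply_mul_dist_le (hS : IsBusemannSpace S) (hγ : IsGeodesicFromTo γ x y)
    (hγ' : IsGeodesicFromTo γ' x' y') {t : ℝ} (ht : t ∈ Icc (0 : ℝ) 1) :
    dist (γ (t * dist x y)) (γ' (t * dist x' y')) ≤ (1 - t) * dist x x' + t * dist y y' := by
  have hconvex := hS.2 γ γ' 0 (dist x y) 0 (dist x' y') dist_nonneg dist_nonneg hγ.1 hγ'.1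
  simpa [hγ.2.1, hγ.2.2, hγ'.2.1, hγ'.2.2] using hconvex.2 (left_mem_Icc.2 zero_le_one)
    (right_mem_Icc.2 zero_le_one) (sub_nonneg.2 ht.2) ht.1 (sub_add_cancel 1 t)

theorem apply_mul_dist_eq (hS : IsBusemannSpace S) (hγ : IsGeodesicFromTo γ x y)
    (hγ' : IsGeodesicFromTo γ' x y) {t : ℝ} (ht : t ∈ Icc (0 : ℝ) 1) :
    γ (t * dist x y) = γ' (t * dist x y) :=
  dist_le_zero.1 (by simpa using hS.dist_apply_mul_dist_le hγ hγ' ht)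

theorem exists_apply_mul_dist_eq (hS : IsBusemannSpace S) (hγ : IsGeodesicFromTo γ x y)
    (hr : DistBtw x r y) : ∃ t ∈ Icc (0 : ℝ) 1, γ (t * dist x y) = r := by
  have hle : dist x r ≤ dist x y := hr.dist_left_le
  have hmem : dist x r / dist x y ∈ Icc (0 : ℝ) 1 :=
    ⟨by positivity, div_le_one_of_le₀ hle dist_nonneg⟩
  refine ⟨dist x r / dist x y, hmem, ?_⟩
  obtain ⟨α, hα⟩ := hS.1 x r
  obtain ⟨β, hβ⟩ := hS.1 r y
  rw [hS.apply_mul_dist_eq hγ (hα.concat hβ hr) hmem,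
    div_mul_cancel_of_imp fun hxy ↦ le_antisymm (hle.trans_eq hxy) dist_nonneg, if_pos le_rfl,
    hα.2.2]

theorem mem_iff_distBtw {s : Set S} (hS : IsBusemannSpace S) (hs : IsGeodesicSegment x y s) :
    r ∈ s ↔ DistBtw x r y := by
  obtain ⟨γ, hγ, rfl⟩ := hs
  refine ⟨?_, fun hr ↦ ?_⟩
  · rintro ⟨t, ht, rfl⟩
    exact hγ.distBtw ht
  · obtain ⟨t, ht, rfl⟩ := hS.exists_apply_mul_dist_eq hγ hr
    exact mem_image_of_mem γ (mul_dist_mem_Icc x y ht)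

end IsBusemannSpace

section GeodesicPath

variable {S : Type*} [MetricSpace S] {γ : ℝ → S} {x y : S}

theorem IsGeodesicFromTo.dist_apply_mul_dist (hγ : IsGeodesicFromTo γ x y) (s t : I) :
    dist (γ (s * dist x y)) (γ (t * dist x y)) = |(s : ℝ) - t| * dist x y := by
  rw [hγ.1 _ (mul_dist_mem_Icc x y s.2) _ (mul_dist_mem_Icc x y t.2), ← sub_mul, abs_mul,
    abs_of_nonneg dist_nonneg]

/-- A geodesic from `x` to `y`, reparametrized with constant speed by the unit interval. -/
noncomputable def IsGeodesicMetricSpace.path (hS : IsGeodesicMetricSpace S) (x y : S) :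
    Path x y where
  toFun t := (hS x y).choose (t * dist x y)
  continuous_toFun := (LipschitzWith.of_dist_le_mul (K := nndist x y) fun s t ↦ by
    rw [(hS x y).choose_spec.dist_apply_mul_dist, mul_comm]; rfl).continuous
  source' := by simpa using (hS x y).choose_spec.2.1
  target' := by simpa using (hS x y).choose_spec.2.2

theorem IsBusemannSpace.isUniqueGeodesicFamily (hS : IsBusemannSpace S) :
    IsUniqueGeodesicFamily hS.1.path where
  dist_apply_apply x y s t := (hS.1 x y).choose_spec.dist_apply_mul_dist s t
  exists_apply_eq {x r y} hr := by
    obtain ⟨t, ht, htr⟩ := hS.exists_apply_mul_dist_eq (hS.1 x y).choose_spec hr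
    exact ⟨⟨t, ht⟩, htr⟩
  continuous_apply x := by
    have hlip (t : I) : LipschitzWith 1 fun y ↦ hS.1.path x y t :=
      .of_dist_le_mul fun y y' ↦ by
        have hle := hS.dist_apply_mul_dist_le (hS.1 x y).choose_spec (hS.1 x y').choose_spec t.2
        rw [dist_self, mul_zero, zero_add] at hle
        exact hle.trans (mul_le_mul_of_nonneg_right t.2.2 dist_nonneg)
    exact continuous_prod_of_continuous_lipschitzWith _ 1 (fun y ↦ (hS.1.path x y).continuous) hlip

end GeodesicPath

theorem busemann_surface_peano_general {S : Type*} [MetricSpace S] (hS : IsBusemannSpace S)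
    {φ : S → ℝ × ℝ} (hφ : Continuous φ) (hinj : Function.Injective φ)
    (seg : S → S → Set S) (hseg : ∀ x y : S, IsGeodesicSegment x y (seg x y))
    (x y z p q u : S) (hp : p ∈ seg x y) (hq : q ∈ seg x z) (hu : u ∈ seg p q) :
    ∃ v ∈ seg y z, u ∈ seg x v := by
  have mem_seg (x r y : S) : r ∈ seg x y ↔ DistBtw x r y := hS.mem_iff_distBtw (hseg x y)
  simp only [mem_seg] at hp hq hu ⊢
  let toComplex : (ℝ × ℝ) ≃L[ℝ] ℂ := Complex.equivRealProdCLM.symm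
  exact peano_distBtw hS.isUniqueGeodesicFamily (toComplex.continuous.comp hφ)
    (toComplex.injective.comp hinj) hp hq hu

/-- Peano axiom: if `p ∈ [x,y]`, `q ∈ [x,z]` and `u ∈ [p,q]`, then there is
`v ∈ [y,z]` with `u ∈ [x,v]`. -/
theorem busemann_surface_peano {S : Type*} [MetricSpace S]
    (hS : IsBusemannSurface S)
    (seg : S → S → Set S) (hseg : ∀ x y : S, IsGeodesicSegment x y (seg x y))
    (x y z p q u : S) (hp : p ∈ seg x y) (hq : q ∈ seg x z) (hu : u ∈ seg p q) :
    ∃ v ∈ seg y z, u ∈ seg x v := by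
  exact busemann_surface_peano_general hS.1 hS.2.some.continuous hS.2.some.injective seg hseg
    x y z p q u hp hq hu
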